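/- arXiv:2008.09959 — 3 statements merged into one kernel-verified Lean document; each statement's English description precedes it below -/
import Mathlib

section
/- Let r > 0 and μ > 0 be real numbers with r ≠ μ. The function φ_F(a) = 1 − (μ³/((r−μ)²(r+μ)))·exp(−r·a) − (r/(2(r−μ)²(r+μ)))·exp(−μ·a)·(μ²·a²·(r−μ)² + 2rμ(r−μ)·a + 2(r² − rμ − μ²)) is monotone nondecreasing on [0, ∞), and φ_F(0) = 0. -/
noncomputable def PhiF (r μ a : ℝ) : ℝ :=
  (μ / (r - μ))^2 * r *
    (Real.exp (-r * a) - Real.exp (-μ * a) + (r - μ) * a * Real.exp (-μ * a)) *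
    (μ / (r + μ)) +
  (1/2) * a^2 * μ^3 * Real.exp (-μ * a) * (r / (r + μ))

noncomputable def phiF (r μ a : ℝ) : ℝ :=
  1 - (μ^3 / ((r - μ)^2 * (r + μ))) * Real.exp (-r * a) -
    (r / (2 * (r - μ)^2 * (r + μ))) * Real.exp (-μ * a) *
      (μ^2 * a^2 * (r - μ)^2 + 2 * r * μ * (r - μ) * a + 2 * (r^2 - r * μ - μ^2))

noncomputable def PhiL (r μ a : ℝ) : ℝ :=
  ((r * (r + μ) * a - (2 * μ^3 - r^3 - r^2 * μ) / (μ * (r - μ))) * Real.exp (-(r + μ) * a) +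
    ((r * μ + 2 * μ^2) / (r - μ)) * Real.exp (-μ * a) -
    ((r * μ * (r + μ) + r^3) / (μ * (r - μ))) * Real.exp (-r * a)) * (μ / (r + μ)) +
  (μ^2 / r^2) *
    (Real.exp (-(r + μ) * a) * (3 * μ + 2 * r + r * (r + μ) * a) -
      Real.exp (-μ * a) * (3 * μ + 2 * r - r * (r + 2 * μ) * a)) * (r / (r + μ))

/-!
The derivative `Φ_F` factors as `rμ / (r + μ)` times a nonnegative combination of
`exp (-ra) - exp (-μa) + (r - μ) a exp (-μa)` and `(μa)² exp (-μa)`. The former is the gap at `-ra`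
between `exp` and its tangent line at `-μa`, so convexity of `exp` gives `0 ≤ Φ_F` at every real
`a`, of either sign.
-/

lemma exp_add_sub_mul_exp_le_exp (x y : ℝ) :
    Real.exp y + (x - y) * Real.exp y ≤ Real.exp x :=
  calc
    Real.exp y + (x - y) * Real.exp y = (x - y + 1) * Real.exp y := by ring
    _ ≤ Real.exp (x - y) * Real.exp y := by gcongr; exact Real.add_one_le_exp _
    _ = Real.exp x := by rw [← Real.exp_add, sub_add_cancel]

lemma hasDerivAt_exp_const_mul (k a : ℝ) :
    HasDerivAt (fun t ↦ Real.exp (k * t)) (k * Real.exp (k * a)) a := by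
  simpa only [mul_comm, id, mul_one] using ((hasDerivAt_id a).const_mul k).exp

lemma PhiF_eq_mul (r μ a : ℝ) :
    PhiF r μ a = r * μ / (r + μ) *
      ((μ / (r - μ)) ^ 2 *
          (Real.exp (-r * a) - Real.exp (-μ * a) + (r - μ) * a * Real.exp (-μ * a)) +
        (μ * a) ^ 2 / 2 * Real.exp (-μ * a)) := by
  unfold PhiF
  ring

section

variable {r μ : ℝ}

lemma PhiF_nonneg (h : 0 ≤ r * μ / (r + μ)) (a : ℝ) : 0 ≤ PhiF r μ a := by
  have tangent_gap : 0 ≤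
      Real.exp (-r * a) - Real.exp (-μ * a) + (r - μ) * a * Real.exp (-μ * a) := by
    linarith [exp_add_sub_mul_exp_le_exp (-r * a) (-μ * a)]
  rw [PhiF_eq_mul]
  positivity

lemma hasDerivAt_phiF (hne : r ≠ μ) (hsum : r + μ ≠ 0) (a : ℝ) :
    HasDerivAt (phiF r μ) (PhiF r μ a) a := by
  have hdiff : r - μ ≠ 0 := sub_ne_zero.mpr hne
  have polynomial_factor : HasDerivAt
      (fun t ↦ μ ^ 2 * t ^ 2 * (r - μ) ^ 2 + 2 * r * μ * (r - μ) * t +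
        2 * (r ^ 2 - r * μ - μ ^ 2))
      (μ ^ 2 * (2 * a) * (r - μ) ^ 2 + 2 * r * μ * (r - μ)) a := by
    simpa using ((((hasDerivAt_pow 2 a).const_mul (μ ^ 2)).mul_const ((r - μ) ^ 2)).add
      ((hasDerivAt_id a).const_mul (2 * r * μ * (r - μ)))).add_const
        (2 * (r ^ 2 - r * μ - μ ^ 2))
  have first_term := (hasDerivAt_exp_const_mul (-r) a).const_mul (μ ^ 3 / ((r - μ) ^ 2 * (r + μ)))
  have second_term := ((hasDerivAt_exp_const_mul (-μ) a).const_mul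
    (r / (2 * (r - μ) ^ 2 * (r + μ)))).mul polynomial_factor
  refine ((first_term.const_sub 1).sub second_term).congr_deriv ?_
  unfold PhiF
  field_simp
  ring

lemma phiF_zero (hne : r ≠ μ) (hsum : r + μ ≠ 0) : phiF r μ 0 = 0 := by
  have hdiff : r - μ ≠ 0 := sub_ne_zero.mpr hne
  simp only [phiF, mul_zero, Real.exp_zero]
  field_simp
  ring

theorem phiF_monotone_and_zero_general (hne : r ≠ μ) (hsum : r + μ ≠ 0)
    (h : 0 ≤ r * μ / (r + μ)) : Monotone (phiF r μ) ∧ phiF r μ 0 = 0 :=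
  ⟨monotone_of_hasDerivAt_nonneg (hasDerivAt_phiF hne hsum) (PhiF_nonneg h),
    phiF_zero hne hsum⟩

end

theorem phiF_monotone_and_zero (r μ : ℝ) (hr : 0 < r) (hμ : 0 < μ) (hne : r ≠ μ) :
    MonotoneOn (phiF r μ) (Set.Ici 0) ∧ phiF r μ 0 = 0 := by
  obtain ⟨hmono, hzero⟩ := phiF_monotone_and_zero_general hne (by positivity) (by positivity)
  exact ⟨hmono.monotoneOn _, hzero⟩
end

section
/- Let r > 0 and μ > 0 be real numbers with r ≠ μ. The mean of the FCFS M/M/1/2 peak-age-of-information density equals the average peak AoI per queue given in the paper: ∫₀^∞ a · Φ_F(a) da = 1/r + 3/μ − 2/(r+μ). -/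
/-!
Up to the weights `μ / (r + μ)` and `r / (r + μ)`, the two summands of `PhiF r μ` are probability
densities: the first is that of `X + Y` with independent `X ∼ Exp(r)` and `Y ∼ Gamma(2, μ)`, the
second is that of `Gamma(3, μ)`. Their means are `1 / r + 2 / μ` and `3 / μ`; the former because
multiplication by the variable is a derivation for convolution.
-/

open MeasureTheory ProbabilityTheory Set
open scoped Convolution

section Convolution

variable {E E' F : Type*} [NormedAddCommGroup E] [NormedSpace ℝ E] [NormedAddCommGroup E']
  [NormedSpace ℝ E'] [NormedAddCommGroup F] [NormedSpace ℝ F] {f : ℝ → E} {g : ℝ → E'}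
  (L : E →L[ℝ] E' →L[ℝ] F)

theorem id_smul_convolution_ae_eq (hf : Integrable f) (hg : Integrable g)
    (hxf : Integrable fun x ↦ x • f x) (hxg : Integrable fun x ↦ x • g x) :
    (fun x ↦ x • (f ⋆[L] g) x) =ᵐ[volume]
      ((fun x ↦ x • f x) ⋆[L] g) + (f ⋆[L] fun x ↦ x • g x) := by
  filter_upwards [hxf.ae_convolution_exists L hg, hf.ae_convolution_exists L hxg] with x hxfg hfxg
  rw [Pi.add_apply, convolution_def, convolution_def, convolution_def, ← integral_smul,
    ← integral_add hxfg hfxg]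
  congr with t
  rw [map_smul, smul_apply, map_smul, ← add_smul, add_sub_cancel]

theorem integrable_id_smul_convolution (hf : Integrable f) (hg : Integrable g)
    (hxf : Integrable fun x ↦ x • f x) (hxg : Integrable fun x ↦ x • g x) :
    Integrable fun x ↦ x • (f ⋆[L] g) x :=
  ((hxf.integrable_convolution L hg).add (hf.integrable_convolution L hxg)).congr
    (id_smul_convolution_ae_eq L hf hg hxf hxg).symm

theorem integral_id_smul_convolution [CompleteSpace E] [CompleteSpace E'] [CompleteSpace F]
    (hf : Integrable f) (hg : Integrable g)
    (hxf : Integrable fun x ↦ x • f x) (hxg : Integrable fun x ↦ x • g x) :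
    ∫ x, x • (f ⋆[L] g) x =
      L (∫ x, x • f x) (∫ x, g x) + L (∫ x, f x) (∫ x, x • g x) := by
  rw [integral_congr_ae (id_smul_convolution_ae_eq L hf hg hxf hxg),
    integral_add' (hxf.integrable_convolution L hg) (hf.integrable_convolution L hxg),
    integral_convolution L hxf hg, integral_convolution L hf hxg]

theorem convolution_eq_zero_of_neg (hf : ∀ x < 0, f x = 0) (hg : ∀ x < 0, g x = 0) {x : ℝ}
    (hx : x < 0) : (f ⋆[L] g) x = 0 := by
  refine integral_eq_zero_of_ae (.of_forall fun t ↦ ?_)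
  rcases lt_or_ge t 0 with ht | ht
  · simp [hf t ht]
  · simp [hg (x - t) (by linarith)]

theorem convolution_eq_intervalIntegral (hf : ∀ x < 0, f x = 0) (hg : ∀ x < 0, g x = 0) {x : ℝ}
    (hx : 0 ≤ x) : (f ⋆[L] g) x = ∫ t in 0..x, L (f t) (g (x - t)) := by
  have outside_Icc : ∀ t, t ∉ Icc 0 x → L (f t) (g (x - t)) = 0 := by
    intro t ht
    rcases lt_or_ge t 0 with ht₀ | ht₀
    · simp [hf t ht₀]
    · have hxt : x < t := lt_of_not_ge fun h ↦ ht ⟨ht₀, h⟩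
      simp [hg (x - t) (by linarith)]
  rw [convolution_def, ← setIntegral_eq_integral_of_forall_compl_eq_zero outside_Icc,
    integral_Icc_eq_integral_Ioc, intervalIntegral.integral_of_le hx]

end Convolution

section Gamma

variable {a r : ℝ}

theorem gammaPDFReal_of_neg {x : ℝ} (hx : x < 0) : gammaPDFReal a r x = 0 :=
  if_neg hx.not_ge

theorem gammaPDFReal_natCast_add_one (n : ℕ) {x : ℝ} (hx : 0 ≤ x) :
    gammaPDFReal (n + 1) r x = r ^ (n + 1) / n.factorial * x ^ n * Real.exp (-(r * x)) := by
  rw [gammaPDFReal, if_pos hx, Real.Gamma_nat_eq_factorial, add_sub_cancel_right,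
    Real.rpow_natCast, ← Nat.cast_add_one, Real.rpow_natCast]

theorem id_mul_gammaPDFReal (ha : a ≠ 0) (hr : r ≠ 0) (x : ℝ) :
    x * gammaPDFReal a r x = a / r * gammaPDFReal (a + 1) r x := by
  rcases lt_trichotomy x 0 with hx | rfl | hx
  · rw [gammaPDFReal_of_neg hx, gammaPDFReal_of_neg hx, mul_zero, mul_zero]
  · simp [gammaPDFReal, Real.zero_rpow ha]
  · rw [gammaPDFReal, gammaPDFReal, if_pos hx.le, if_pos hx.le, Real.Gamma_add_one ha,
      Real.rpow_add_one hr, add_sub_cancel_right, Real.rpow_sub_one hx.ne']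
    field_simp

theorem integrable_gammaPDFReal (ha : 0 < a) (hr : 0 < r) : Integrable (gammaPDFReal a r) := by
  rw [← lintegral_ofReal_ne_top_iff_integrable (by fun_prop)
    (.of_forall (gammaPDFReal_nonneg ha hr))]
  exact (lintegral_gammaPDF_eq_one ha hr).trans_ne ENNReal.one_ne_top

theorem integral_gammaPDFReal (ha : 0 < a) (hr : 0 < r) : ∫ x, gammaPDFReal a r x = 1 := by
  rw [integral_eq_lintegral_of_nonneg_ae (.of_forall (gammaPDFReal_nonneg ha hr)) (by fun_prop)]
  exact congrArg ENNReal.toReal (lintegral_gammaPDF_eq_one ha hr)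

theorem integrable_id_mul_gammaPDFReal (ha : 0 < a) (hr : 0 < r) :
    Integrable fun x ↦ x * gammaPDFReal a r x := by
  simp only [id_mul_gammaPDFReal ha.ne' hr.ne']
  exact (integrable_gammaPDFReal (by positivity) hr).const_mul _

theorem integral_id_mul_gammaPDFReal (ha : 0 < a) (hr : 0 < r) :
    ∫ x, x * gammaPDFReal a r x = a / r := by
  simp only [id_mul_gammaPDFReal ha.ne' hr.ne']
  rw [integral_const_mul, integral_gammaPDFReal (by positivity) hr, mul_one]

variable {b s : ℝ}

theorem integrable_id_mul_convolution_gammaPDFReal (ha : 0 < a) (hr : 0 < r) (hb : 0 < b)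
    (hs : 0 < s) : Integrable fun x ↦ x * (gammaPDFReal a r ⋆ gammaPDFReal b s) x :=
  integrable_id_smul_convolution _ (integrable_gammaPDFReal ha hr) (integrable_gammaPDFReal hb hs)
    (integrable_id_mul_gammaPDFReal ha hr) (integrable_id_mul_gammaPDFReal hb hs)

theorem integral_id_mul_convolution_gammaPDFReal (ha : 0 < a) (hr : 0 < r) (hb : 0 < b)
    (hs : 0 < s) :
    ∫ x, x * (gammaPDFReal a r ⋆ gammaPDFReal b s) x = a / r + b / s := by
  have mean_add := integral_id_smul_convolution (.lsmul ℝ ℝ)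
    (integrable_gammaPDFReal ha hr) (integrable_gammaPDFReal hb hs)
    (integrable_id_mul_gammaPDFReal ha hr) (integrable_id_mul_gammaPDFReal hb hs)
  simpa only [ContinuousLinearMap.lsmul_apply, smul_eq_mul, integral_gammaPDFReal ha hr,
    integral_gammaPDFReal hb hs, integral_id_mul_gammaPDFReal ha hr,
    integral_id_mul_gammaPDFReal hb hs, mul_one, one_mul] using mean_add

end Gamma

theorem integral_id_mul_exp_mul {c : ℝ} (hc : c ≠ 0) (x : ℝ) :
    ∫ t in 0..x, t * Real.exp (c * t) =
      (1 - Real.exp (c * x) + c * x * Real.exp (c * x)) / c ^ 2 := by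
  have antideriv (t : ℝ) : HasDerivAt (fun t ↦ (c * t - 1) / c ^ 2 * Real.exp (c * t))
      (t * Real.exp (c * t)) t := by
    have hlin : HasDerivAt (fun t ↦ c * t) c t := by simpa using (hasDerivAt_id t).const_mul c
    refine (((hlin.sub_const 1).div_const (c ^ 2)).mul hlin.exp).congr_deriv ?_
    field_simp
    ring
  rw [intervalIntegral.integral_eq_sub_of_hasDerivAt (fun t _ ↦ antideriv t)
    (Continuous.intervalIntegrable (by fun_prop) _ _), mul_zero, Real.exp_zero]
  ring

theorem convolution_gammaPDFReal_two_one {r μ x : ℝ} (hne : r ≠ μ) (hx : 0 ≤ x) :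
    (gammaPDFReal 2 μ ⋆ gammaPDFReal 1 r) x = (μ / (r - μ)) ^ 2 * r *
      (Real.exp (-r * x) - Real.exp (-μ * x) + (r - μ) * x * Real.exp (-μ * x)) := by
  have integrand : ∀ t ∈ uIcc 0 x, gammaPDFReal 2 μ t * gammaPDFReal 1 r (x - t) =
      μ ^ 2 * r * Real.exp (-r * x) * (t * Real.exp ((r - μ) * t)) := by
    intro t ht
    rw [uIcc_of_le hx] at ht
    have pdf_two : gammaPDFReal 2 μ t = μ ^ 2 * t * Real.exp (-(μ * t)) := by
      simpa [one_add_one_eq_two] using gammaPDFReal_natCast_add_one (r := μ) 1 ht.1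
    have pdf_one : gammaPDFReal 1 r (x - t) = r * Real.exp (-(r * (x - t))) := by
      simpa using gammaPDFReal_natCast_add_one (r := r) 0 (sub_nonneg.2 ht.2)
    have exp_mul_exp : Real.exp (-(μ * t)) * Real.exp (-(r * (x - t))) =
        Real.exp (-r * x) * Real.exp ((r - μ) * t) := by
      rw [← Real.exp_add, ← Real.exp_add]
      ring_nf
    rw [pdf_two, pdf_one]
    linear_combination μ ^ 2 * r * t * exp_mul_exp
  have exp_at_endpoint : Real.exp (-r * x) * Real.exp ((r - μ) * x) = Real.exp (-μ * x) := by
    rw [← Real.exp_add]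
    ring_nf
  rw [convolution_eq_intervalIntegral _ (fun _ ↦ gammaPDFReal_of_neg)
    (fun _ ↦ gammaPDFReal_of_neg) hx]
  simp only [ContinuousLinearMap.lsmul_apply, smul_eq_mul]
  rw [intervalIntegral.integral_congr integrand, intervalIntegral.integral_const_mul,
    integral_id_mul_exp_mul (sub_ne_zero.2 hne), ← exp_at_endpoint]
  field_simp

/-- The FCFS peak-age density as a density on the whole line: the mixture, with weights
`μ / (r + μ)` and `r / (r + μ)`, of the density of a sum of independent `Gamma(2, μ)` and `Exp(r)`
variables and of the `Gamma(3, μ)` density. The exponential density is written as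
`gammaPDFReal 1 r`. -/
noncomputable def peakAgeMixture (r μ x : ℝ) : ℝ :=
  μ / (r + μ) * (gammaPDFReal 2 μ ⋆ gammaPDFReal 1 r) x + r / (r + μ) * gammaPDFReal 3 μ x

theorem peakAgeMixture_of_neg (r μ : ℝ) {x : ℝ} (hx : x < 0) : peakAgeMixture r μ x = 0 := by
  rw [peakAgeMixture, gammaPDFReal_of_neg hx, convolution_eq_zero_of_neg _
    (fun _ ↦ gammaPDFReal_of_neg) (fun _ ↦ gammaPDFReal_of_neg) hx, mul_zero, mul_zero, add_zero]

theorem PhiF_eq_peakAgeMixture {r μ x : ℝ} (hne : r ≠ μ) (hx : 0 ≤ x) :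
    PhiF r μ x = peakAgeMixture r μ x := by
  have pdf_three : gammaPDFReal 3 μ x = μ ^ 3 / 2 * x ^ 2 * Real.exp (-(μ * x)) := by
    simpa [two_add_one_eq_three] using gammaPDFReal_natCast_add_one (r := μ) 2 hx
  rw [PhiF, peakAgeMixture, convolution_gammaPDFReal_two_one hne hx, pdf_three, neg_mul μ]
  ring

theorem integral_id_mul_peakAgeMixture {r μ : ℝ} (hr : 0 < r) (hμ : 0 < μ) :
    ∫ x, x * peakAgeMixture r μ x =
      μ / (r + μ) * (2 / μ + 1 / r) + r / (r + μ) * (3 / μ) := by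
  simp only [peakAgeMixture, mul_add, mul_left_comm _ (_ / _)]
  rw [integral_add
      ((integrable_id_mul_convolution_gammaPDFReal two_pos hμ one_pos hr).const_mul _)
      ((integrable_id_mul_gammaPDFReal three_pos hμ).const_mul _),
    integral_const_mul, integral_const_mul,
    integral_id_mul_convolution_gammaPDFReal two_pos hμ one_pos hr,
    integral_id_mul_gammaPDFReal three_pos hμ, mul_add]

theorem PhiF_mean (r μ : ℝ) (hr : 0 < r) (hμ : 0 < μ) (hne : r ≠ μ) :
    ∫ a in Set.Ioi (0:ℝ), a * PhiF r μ a = 1/r + 3/μ - 2/(r + μ) := by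
  calc ∫ a in Set.Ioi (0:ℝ), a * PhiF r μ a
      = ∫ a in Set.Ioi (0:ℝ), a * peakAgeMixture r μ a :=
        setIntegral_congr_fun measurableSet_Ioi fun a (ha : 0 < a) ↦
          congrArg (a * ·) (PhiF_eq_peakAgeMixture hne ha.le)
    _ = ∫ a, a * peakAgeMixture r μ a := by
        refine setIntegral_eq_integral_of_forall_compl_eq_zero fun a ha ↦ ?_
        rcases (not_lt.1 (show ¬0 < a from ha)).lt_or_eq with ha | rfl
        · rw [peakAgeMixture_of_neg r μ ha, mul_zero]
        · rw [zero_mul]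
    _ = μ / (r + μ) * (2 / μ + 1 / r) + r / (r + μ) * (3 / μ) :=
        integral_id_mul_peakAgeMixture hr hμ
    _ = 1/r + 3/μ - 2/(r + μ) := by
        field_simp
        ring
end

section
/- Let r > 0 and μ > 0 be real numbers with r ≠ μ. The mean of the preemptive LCFS M/M/1/2* peak-age-of-information density equals the average peak AoI per queue given in the paper: ∫₀^∞ a · Φ_L(a) da = 1/r + 1/μ + r/(r+μ)² + r/(μ(r+μ)). -/
/-!
`PhiL` is a mixture of two densities, according to whether another packet arrives during the
service of the packet whose age is observed. By `∫ aᵏ exp (-c a) = k! / c ^ (k + 1)` the mean of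
each component is a sum of mean durations: a delivered packet has to wait with probability
`r / (r + μ)`, and then for a mean time `1 / (r + μ)`; the remaining phases contribute
`1 / (r + μ) + 1 / r + 1 / μ` without such an arrival and `1 / (r + μ) + 2 / μ` with one.
-/

noncomputable section

open MeasureTheory Real Set
open scoped Nat

/-- `HasMoment k f m` says that `f` has `k`-th moment `m` on `(0, ∞)`: the integral of `a ^ k * f a`
converges absolutely and equals `m`. As with `HasSum`, the value is a parameter, so that moments
of linear combinations can be computed without separate integrability side goals. -/
structure HasMoment (k : ℕ) (f : ℝ → ℝ) (m : ℝ) : Prop where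
  integrableOn : IntegrableOn (fun a ↦ a ^ k * f a) (Ioi 0)
  integral_eq : ∫ a in Ioi (0 : ℝ), a ^ k * f a = m

namespace HasMoment

variable {k : ℕ} {f g : ℝ → ℝ} {m₁ m₂ : ℝ}

theorem add (hf : HasMoment k f m₁) (hg : HasMoment k g m₂) :
    HasMoment k (fun a ↦ f a + g a) (m₁ + m₂) where
  integrableOn := by
    simp only [mul_add]
    exact hf.integrableOn.add hg.integrableOn
  integral_eq := by
    simp only [mul_add, integral_add hf.integrableOn hg.integrableOn, hf.integral_eq,
      hg.integral_eq]

theorem const_mul (c : ℝ) (hf : HasMoment k f m₁) :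
    HasMoment k (fun a ↦ c * f a) (c * m₁) where
  integrableOn := by
    simp only [mul_left_comm _ c]
    exact hf.integrableOn.const_mul c
  integral_eq := by simp only [mul_left_comm _ c, integral_const_mul, hf.integral_eq]

end HasMoment

theorem hasMoment_exp_neg_mul {c : ℝ} (hc : 0 < c) (k : ℕ) :
    HasMoment k (fun a ↦ exp (-c * a)) (k ! / c ^ (k + 1)) where
  integrableOn := by
    have hk : (-1 : ℝ) < k := by linarith [k.cast_nonneg (α := ℝ)]
    simpa using integrableOn_rpow_mul_exp_neg_mul_rpow hk one_pos hc
  integral_eq := by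
    have h := integral_rpow_mul_exp_neg_mul_Ioi (a := (k : ℝ) + 1) (by positivity) hc
    rw [Gamma_nat_eq_factorial, ← Nat.cast_succ, rpow_natCast] at h
    simpa [div_eq_inv_mul] using h

theorem hasMoment_linear_mul_exp_neg_mul {c : ℝ} (hc : 0 < c) (k : ℕ) (p q : ℝ) :
    HasMoment k (fun a ↦ (p + q * a) * exp (-c * a))
      (p * (k ! / c ^ (k + 1)) + q * ((k + 1)! / c ^ (k + 2))) := by
  have mul_id : HasMoment k (fun a ↦ a * exp (-c * a)) ((k + 1)! / c ^ (k + 2)) := by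
    obtain ⟨hint, heq⟩ := hasMoment_exp_neg_mul hc (k + 1)
    simp only [pow_succ _ k, mul_assoc] at hint heq
    exact ⟨hint, heq⟩
  simpa only [add_mul, mul_assoc] using
    ((hasMoment_exp_neg_mul hc k).const_mul p).add (mul_id.const_mul q)

/-- For `r ≠ μ`, the density of the peak age given that no packet arrives during the service of the
packet whose age is observed. The peak age is then the sum of its waiting time, its service time
(conditionally exponential of rate `r + μ`), an idle period of rate `r` and the next service of
rate `μ`. -/
def idlePeakAgeDensity (r μ a : ℝ) : ℝ :=
  (r * (r + μ) * a - (2 * μ^3 - r^3 - r^2 * μ) / (μ * (r - μ))) * exp (-(r + μ) * a) +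
    ((r * μ + 2 * μ^2) / (r - μ)) * exp (-μ * a) -
    ((r * μ * (r + μ) + r^3) / (μ * (r - μ))) * exp (-r * a)

/-- The density of the peak age, given that some packet arrives during the service of the packet
whose age is observed. The peak age is then the sum of its waiting time, the time to the next
arrival (conditionally exponential of rate `r + μ`), the residual service and the next service,
both of rate `μ`. -/
def busyPeakAgeDensity (r μ a : ℝ) : ℝ :=
  (μ^2 / r^2) *
    (exp (-(r + μ) * a) * (3 * μ + 2 * r + r * (r + μ) * a) -
      exp (-μ * a) * (3 * μ + 2 * r - r * (r + 2 * μ) * a))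

theorem PhiL_eq_mixture (r μ a : ℝ) :
    PhiL r μ a =
      μ / (r + μ) * idlePeakAgeDensity r μ a + r / (r + μ) * busyPeakAgeDensity r μ a := by
  rw [PhiL, idlePeakAgeDensity, busyPeakAgeDensity]
  ring

variable {r μ : ℝ}

theorem hasMoment_one_idlePeakAgeDensity (hr : 0 < r) (hμ : 0 < μ) (hne : r ≠ μ) :
    HasMoment 1 (idlePeakAgeDensity r μ) (1 / r + 1 / μ + 1 / (r + μ) + r / (r + μ)^2) := by
  have hd : r - μ ≠ 0 := sub_ne_zero.mpr hne
  have hexp_add := hasMoment_linear_mul_exp_neg_mul (add_pos hr hμ) 1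
    (-((2 * μ^3 - r^3 - r^2 * μ) / (μ * (r - μ)))) (r * (r + μ))
  have hexp_μ := (hasMoment_exp_neg_mul hμ 1).const_mul ((r * μ + 2 * μ^2) / (r - μ))
  have hexp_r := (hasMoment_exp_neg_mul hr 1).const_mul
    (-((r * μ * (r + μ) + r^3) / (μ * (r - μ))))
  convert (hexp_add.add hexp_μ).add hexp_r using 1
  · funext a
    rw [idlePeakAgeDensity]
    ring
  · simp only [Nat.factorial]
    field_simp
    push_cast
    ring

theorem hasMoment_one_busyPeakAgeDensity (hr : 0 < r) (hμ : 0 < μ) :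
    HasMoment 1 (busyPeakAgeDensity r μ) (2 / μ + 1 / (r + μ) + r / (r + μ)^2) := by
  have hexp_add := hasMoment_linear_mul_exp_neg_mul (add_pos hr hμ) 1
    (3 * μ + 2 * r) (r * (r + μ))
  have hexp_μ := hasMoment_linear_mul_exp_neg_mul hμ 1
    (-(3 * μ + 2 * r)) (r * (r + 2 * μ))
  convert (hexp_add.add hexp_μ).const_mul (μ^2 / r^2) using 1
  · funext a
    rw [busyPeakAgeDensity]
    ring
  · simp only [Nat.factorial]
    field_simp
    push_cast
    ring

theorem hasMoment_one_PhiL (hr : 0 < r) (hμ : 0 < μ) (hne : r ≠ μ) :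
    HasMoment 1 (PhiL r μ)
      (μ / (r + μ) * (1 / r + 1 / μ + 1 / (r + μ) + r / (r + μ)^2) +
        r / (r + μ) * (2 / μ + 1 / (r + μ) + r / (r + μ)^2)) := by
  simpa only [← PhiL_eq_mixture] using
    ((hasMoment_one_idlePeakAgeDensity hr hμ hne).const_mul (μ / (r + μ))).add
      ((hasMoment_one_busyPeakAgeDensity hr hμ).const_mul (r / (r + μ)))

end

theorem PhiL_mean (r μ : ℝ) (hr : 0 < r) (hμ : 0 < μ) (hne : r ≠ μ) :
    ∫ a in Set.Ioi (0:ℝ), a * PhiL r μ a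
      = 1/r + 1/μ + r/(r + μ)^2 + r/(μ * (r + μ)) := by
  have h := (hasMoment_one_PhiL hr hμ hne).integral_eq
  simp only [pow_one] at h
  rw [h]
  field_simp
  ring
end
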